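/- For every integer m ≥ 1, setting γ = (m!)^{1/m} and β = ((m+1)!)^{1/(m+1)}, one has Σ_{i=m+1}^{∞} γ^i/i! < 1 and Σ_{i=m+1}^{∞} β^i/i! > 1. -/

import Mathlib

open Real Finset

lemma aux_fact (m : ℕ) : (Nat.factorial m : ℝ) ≤ (((m : ℝ) + 1) / 2) ^ m := by
  induction m with
  | zero => simp
  | succ n ih =>
    have hn : (0 : ℝ) < (n : ℝ) + 1 := by positivity
    have hb : (2 : ℝ) ≤ (1 + 1 / ((n : ℝ) + 1)) ^ (n + 1) := by
      have h := one_add_mul_le_pow (a := 1 / ((n : ℝ) + 1))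
        (by have : 0 < 1 / ((n : ℝ) + 1) := by positivity
            linarith) (n + 1)
      have e : 1 + ((n + 1 : ℕ) : ℝ) * (1 / ((n : ℝ) + 1)) = 2 := by
        push_cast
        field_simp
        norm_num
      rwa [e] at h
    have e2 : (((n + 1 : ℕ) : ℝ) + 1) / 2
        = (((n : ℝ) + 1) / 2) * (1 + 1 / ((n : ℝ) + 1)) := by
      push_cast
      field_simp
    rw [e2, mul_pow, Nat.factorial_succ]
    push_cast
    calc ((n : ℝ) + 1) * (Nat.factorial n : ℝ)
        ≤ ((n : ℝ) + 1) * (((n : ℝ) + 1) / 2) ^ n := by gcongr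
      _ = (((n : ℝ) + 1) / 2) ^ (n + 1) * 2 := by ring
      _ ≤ _ := by gcongr

lemma aux_summable (x : ℝ) (k : ℕ) :
    Summable (fun i : ℕ => x ^ (k + i) / (Nat.factorial (k + i) : ℝ)) := by
  have h := (summable_nat_add_iff k).2 (Real.summable_pow_div_factorial x)
  simpa [add_comm] using h

/-- For every integer `m ≥ 1`, setting `γ = (m!)^{1/m}` and
`β = ((m+1)!)^{1/(m+1)}`, the tail of the exponential series satisfies
`Σ_{i=m+1}^{∞} γ^i/i! < 1` and `Σ_{i=m+1}^{∞} β^i/i! > 1`. -/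
theorem tail_lt_one_and_gt_one (m : ℕ) (hm : 1 ≤ m) :
    (∑' i : ℕ, ((Nat.factorial m : ℝ) ^ ((1 : ℝ) / m)) ^ (m + 1 + i) /
        (Nat.factorial (m + 1 + i) : ℝ)) < 1 ∧
    1 < (∑' i : ℕ, ((Nat.factorial (m + 1) : ℝ) ^ ((1 : ℝ) / (m + 1))) ^ (m + 1 + i) /
        (Nat.factorial (m + 1 + i) : ℝ)) := by
  constructor
  · have hpow : ((Nat.factorial m : ℝ) ^ ((1 : ℝ) / m)) ^ m = (Nat.factorial m : ℝ) := by
      rw [one_div]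
      exact Real.rpow_inv_natCast_pow (by positivity) (by omega)
    have hg0 : 0 < (Nat.factorial m : ℝ) ^ ((1 : ℝ) / m) := by positivity
    generalize (Nat.factorial m : ℝ) ^ ((1 : ℝ) / m) = g at hpow hg0
    have hg : g ≤ ((m : ℝ) + 1) / 2 := by
      refine le_of_pow_le_pow_left₀ (n := m) (by omega) (by positivity) ?_
      rw [hpow]
      exact aux_fact m
    have hstep : ∀ k : ℕ, g ^ (m + 1 + (k + 1)) / (Nat.factorial (m + 1 + (k + 1)) : ℝ)
        < g ^ (m + 1 + k) / (Nat.factorial (m + 1 + k) : ℝ) * (1 / 2) := by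
      intro k
      have e : g ^ (m + 1 + (k + 1)) / (Nat.factorial (m + 1 + (k + 1)) : ℝ)
          = g ^ (m + 1 + k) / (Nat.factorial (m + 1 + k) : ℝ) * (g / ((m : ℝ) + 1 + k + 1)) := by
        rw [← add_assoc, Nat.factorial_succ, pow_succ]
        push_cast
        field_simp
      rw [e]
      have : g / ((m : ℝ) + 1 + k + 1) < 1 / 2 := by
        rw [div_lt_iff₀ (by positivity)]
        have : (0 : ℝ) ≤ k := by positivity
        linarith
      gcongr
    have hle : ∀ k : ℕ, g ^ (m + 1 + k) / (Nat.factorial (m + 1 + k) : ℝ)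
        ≤ 1 / 2 * (1 / 2) ^ k := by
      intro k
      induction k with
      | zero =>
        simp only [add_zero, pow_zero, mul_one]
        rw [pow_succ, hpow, Nat.factorial_succ, div_le_iff₀ (by positivity)]
        push_cast
        have : (0 : ℝ) < (Nat.factorial m : ℝ) := by positivity
        nlinarith
      | succ k ih =>
        have := hstep k
        rw [pow_succ]
        linarith
    have hs2 : Summable (fun k : ℕ => (1 / 2 : ℝ) * (1 / 2) ^ k) :=
      summable_geometric_two.mul_left _
    have ht : ∑' k : ℕ, (1 / 2 : ℝ) * (1 / 2) ^ k = 1 := by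
      rw [tsum_mul_left, tsum_geometric_two]
      norm_num
    rw [← ht]
    refine Summable.tsum_lt_tsum (i := 1) hle ?_ (aux_summable g (m + 1)) hs2
    have h0 := hle 0
    have h1 := hstep 0
    norm_num at h0 h1 ⊢
    linarith
  · have hpow : ((Nat.factorial (m + 1) : ℝ) ^ ((1 : ℝ) / (m + 1))) ^ (m + 1)
        = (Nat.factorial (m + 1) : ℝ) := by
      have h := Real.rpow_inv_natCast_pow (x := (Nat.factorial (m + 1) : ℝ)) (n := m + 1)
        (by positivity) (by omega)
      rw [one_div]
      push_cast at h ⊢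
      exact h
    have hg0 : 0 < (Nat.factorial (m + 1) : ℝ) ^ ((1 : ℝ) / (m + 1)) := by positivity
    generalize (Nat.factorial (m + 1) : ℝ) ^ ((1 : ℝ) / (m + 1)) = g at hpow hg0
    have h := (aux_summable g (m + 1)).sum_le_tsum (Finset.range 2)
      (fun i _ => by positivity)
    refine lt_of_lt_of_le ?_ h
    rw [Finset.sum_range_succ, Finset.sum_range_one, add_zero, hpow, div_self (by positivity)]
    have : 0 < g ^ (m + 1 + 1) / (Nat.factorial (m + 1 + 1) : ℝ) := by positivity
    linarith
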